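/- Let (A,C)_ψ be an entwining structure with ψ bijective and let q ∈ k be nonzero. Define R on A⊗A by R(a⊗b) = q⁻¹ab⊗1 + q·1⊗ab − q⁻¹a⊗b, R' on C⊗C by R'(c⊗d) = q⁻¹ε(c)Δ(d) + qε(d)Δ(c) − q⁻¹c⊗d, and R⊕_ψR' on (A⊕C)⊗(A⊕C) by restricting to R on A⊗A, to R' on C⊗C, to ψ⁻¹ on A⊗C, and to ψ + (q − q⁻¹)·id on C⊗A. Then R⊕_ψR' satisfies the braid equation and the Hecke relation (R⊕_ψR' + q⁻¹)(R⊕_ψR' − q) = 0, i.e., it is a q-Hecke operator. -/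

import Mathlib

open TensorProduct LinearMap


/-- `ψ : C ⊗ A → A ⊗ C` is an entwining map, i.e. `(A, C)_ψ` is an entwining structure:
(1) `ψ∘(id_C⊗μ) = (μ⊗id_C)∘(id_A⊗ψ)∘(ψ⊗id_A)`;
(2) `(id_A⊗Δ)∘ψ = (ψ⊗id_C)∘(id_C⊗ψ)∘(Δ⊗id_A)`;
(3) `ψ(c⊗1) = 1⊗c`; (4) `(id_A⊗ε)∘ψ = ε⊗id_A`. -/
def IsEntwining (k : Type*) {A C : Type*} [Field k] [Ring A] [Algebra k A]
    [AddCommGroup C] [Module k C] [Coalgebra k C]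
    (ψ : C ⊗[k] A →ₗ[k] A ⊗[k] C) : Prop :=
  (∀ (c : C) (a b : A),
    ψ (c ⊗ₜ[k] (a * b)) =
      (LinearMap.mul' k A).rTensor C
        ((TensorProduct.assoc k A A C).symm
          (ψ.lTensor A ((TensorProduct.assoc k A C A)
            (ψ.rTensor A ((c ⊗ₜ[k] a) ⊗ₜ[k] b)))))) ∧
  (∀ (c : C) (a : A),
    (Coalgebra.comul (R := k) (A := C)).lTensor A (ψ (c ⊗ₜ[k] a)) =
      (TensorProduct.assoc k A C C)
        (ψ.rTensor C ((TensorProduct.assoc k C A C).symm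
          (ψ.lTensor C ((TensorProduct.assoc k C C A)
            ((Coalgebra.comul (R := k) (A := C)).rTensor A (c ⊗ₜ[k] a))))))) ∧
  (∀ c : C, ψ (c ⊗ₜ[k] (1 : A)) = (1 : A) ⊗ₜ[k] c) ∧
  (∀ (c : C) (a : A),
    (Coalgebra.counit (R := k) (A := C)).lTensor A (ψ (c ⊗ₜ[k] a)) =
      a ⊗ₜ[k] Coalgebra.counit (R := k) c)


set_option linter.unusedSimpArgs false

section Helpers

variable {k : Type*} [Field k]

/-- `f` acting on the first two factors of a triple tensor product. -/
noncomputable def opL {X Y X' Y' : Type*} [AddCommGroup X] [Module k X] [AddCommGroup Y]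
    [Module k Y] [AddCommGroup X'] [Module k X'] [AddCommGroup Y'] [Module k Y']
    (Z : Type*) [AddCommGroup Z] [Module k Z]
    (f : X ⊗[k] Y →ₗ[k] X' ⊗[k] Y') : X ⊗[k] (Y ⊗[k] Z) →ₗ[k] X' ⊗[k] (Y' ⊗[k] Z) :=
  (TensorProduct.assoc k X' Y' Z).toLinearMap ∘ₗ f.rTensor Z ∘ₗ
    (TensorProduct.assoc k X Y Z).symm.toLinearMap

theorem opL_tmul {X Y X' Y' Z : Type*} [AddCommGroup X] [Module k X] [AddCommGroup Y]
    [Module k Y] [AddCommGroup X'] [Module k X'] [AddCommGroup Y'] [Module k Y']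
    [AddCommGroup Z] [Module k Z]
    (f : X ⊗[k] Y →ₗ[k] X' ⊗[k] Y') (x : X) (y : Y) (z : Z) :
    opL Z f (x ⊗ₜ (y ⊗ₜ z)) = TensorProduct.assoc k X' Y' Z (f (x ⊗ₜ y) ⊗ₜ z) := by
  simp [opL]

theorem opL_assoc {X Y X' Y' Z : Type*} [AddCommGroup X] [Module k X] [AddCommGroup Y]
    [Module k Y] [AddCommGroup X'] [Module k X'] [AddCommGroup Y'] [Module k Y']
    [AddCommGroup Z] [Module k Z]
    (f : X ⊗[k] Y →ₗ[k] X' ⊗[k] Y') (t : X ⊗[k] Y) (z : Z) :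
    opL Z f (TensorProduct.assoc k X Y Z (t ⊗ₜ z))
      = TensorProduct.assoc k X' Y' Z (f t ⊗ₜ z) := by
  simp [opL]

theorem opL_comp {X Y X' Y' X'' Y'' Z : Type*} [AddCommGroup X] [Module k X] [AddCommGroup Y]
    [Module k Y] [AddCommGroup X'] [Module k X'] [AddCommGroup Y'] [Module k Y']
    [AddCommGroup X''] [Module k X''] [AddCommGroup Y''] [Module k Y'']
    [AddCommGroup Z] [Module k Z]
    (f : X ⊗[k] Y →ₗ[k] X' ⊗[k] Y') (g : X' ⊗[k] Y' →ₗ[k] X'' ⊗[k] Y'')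
    (t : X ⊗[k] (Y ⊗[k] Z)) :
    opL Z g (opL Z f t) = opL Z (g ∘ₗ f) t := by
  simp [opL, LinearMap.rTensor_comp]

theorem opL_id {X Y Z : Type*} [AddCommGroup X] [Module k X] [AddCommGroup Y]
    [Module k Y] [AddCommGroup Z] [Module k Z] (t : X ⊗[k] (Y ⊗[k] Z)) :
    opL Z (LinearMap.id : X ⊗[k] Y →ₗ[k] X ⊗[k] Y) t = t := by
  simp [opL]

theorem opL_add {X Y X' Y' Z : Type*} [AddCommGroup X] [Module k X] [AddCommGroup Y]
    [Module k Y] [AddCommGroup X'] [Module k X'] [AddCommGroup Y'] [Module k Y']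
    [AddCommGroup Z] [Module k Z]
    (f g : X ⊗[k] Y →ₗ[k] X' ⊗[k] Y') (t : X ⊗[k] (Y ⊗[k] Z)) :
    opL Z (f + g) t = opL Z f t + opL Z g t := by
  simp [opL, LinearMap.rTensor_add]

theorem opL_sub {X Y X' Y' Z : Type*} [AddCommGroup X] [Module k X] [AddCommGroup Y]
    [Module k Y] [AddCommGroup X'] [Module k X'] [AddCommGroup Y'] [Module k Y']
    [AddCommGroup Z] [Module k Z]
    (f g : X ⊗[k] Y →ₗ[k] X' ⊗[k] Y') (t : X ⊗[k] (Y ⊗[k] Z)) :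
    opL Z (f - g) t = opL Z f t - opL Z g t := by
  simp [opL, LinearMap.rTensor_sub]

theorem opL_smul {X Y X' Y' Z : Type*} [AddCommGroup X] [Module k X] [AddCommGroup Y]
    [Module k Y] [AddCommGroup X'] [Module k X'] [AddCommGroup Y'] [Module k Y']
    [AddCommGroup Z] [Module k Z]
    (f : X ⊗[k] Y →ₗ[k] X' ⊗[k] Y') (r : k) (t : X ⊗[k] (Y ⊗[k] Z)) :
    opL Z (r • f) t = r • opL Z f t := by
  simp [opL, LinearMap.rTensor_smul]

/-- naturality of `opL` -/
theorem opL_nat {X Y X' Y' U V U' V' Z W : Type*} [AddCommGroup X] [Module k X] [AddCommGroup Y]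
    [Module k Y] [AddCommGroup X'] [Module k X'] [AddCommGroup Y'] [Module k Y']
    [AddCommGroup U] [Module k U] [AddCommGroup V]
    [Module k V] [AddCommGroup U'] [Module k U'] [AddCommGroup V'] [Module k V']
    [AddCommGroup Z] [Module k Z] [AddCommGroup W] [Module k W]
    (f : X ⊗[k] Y →ₗ[k] X' ⊗[k] Y') (g : U ⊗[k] V →ₗ[k] U' ⊗[k] V')
    (a : X →ₗ[k] U) (b : Y →ₗ[k] V) (a' : X' →ₗ[k] U') (b' : Y' →ₗ[k] V') (z : Z →ₗ[k] W)
    (h : ∀ s, g (TensorProduct.map a b s) = TensorProduct.map a' b' (f s))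
    (t : X ⊗[k] (Y ⊗[k] Z)) :
    opL W g (TensorProduct.map a (TensorProduct.map b z) t)
      = TensorProduct.map a' (TensorProduct.map b' z) (opL Z f t) := by
  have aux : ∀ (s : X' ⊗[k] Y') (w : Z),
      TensorProduct.assoc k U' V' W (TensorProduct.map a' b' s ⊗ₜ z w)
      = TensorProduct.map a' (TensorProduct.map b' z) (TensorProduct.assoc k X' Y' Z (s ⊗ₜ w)) := by
    intro s w
    induction s with
    | zero => simp
    | tmul x y => simp
    | add x y hx hy => simp only [map_add, TensorProduct.add_tmul, hx, hy]
  suffices H : opL W g ∘ₗ TensorProduct.map a (TensorProduct.map b z)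
      = TensorProduct.map a' (TensorProduct.map b' z) ∘ₗ opL Z f from
    LinearMap.congr_fun H t
  ext x y w
  simp only [TensorProduct.AlgebraTensorModule.curry_apply, TensorProduct.curry_apply,
    LinearMap.coe_restrictScalars, LinearMap.comp_apply, TensorProduct.map_tmul, opL_tmul]
  rw [← TensorProduct.map_tmul a b, h, aux]

theorem lT_nat {Y Z Y' Z' U V U' V' X W : Type*} [AddCommGroup X] [Module k X] [AddCommGroup Y]
    [Module k Y] [AddCommGroup Z'] [Module k Z'] [AddCommGroup Y'] [Module k Y']
    [AddCommGroup U] [Module k U] [AddCommGroup V]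
    [Module k V] [AddCommGroup U'] [Module k U'] [AddCommGroup V'] [Module k V']
    [AddCommGroup Z] [Module k Z] [AddCommGroup W] [Module k W]
    (f : Y ⊗[k] Z →ₗ[k] Y' ⊗[k] Z') (g : U ⊗[k] V →ₗ[k] U' ⊗[k] V')
    (a : Y →ₗ[k] U) (b : Z →ₗ[k] V) (a' : Y' →ₗ[k] U') (b' : Z' →ₗ[k] V') (x : X →ₗ[k] W)
    (h : ∀ s, g (TensorProduct.map a b s) = TensorProduct.map a' b' (f s))
    (t : X ⊗[k] (Y ⊗[k] Z)) :
    g.lTensor W (TensorProduct.map x (TensorProduct.map a b) t)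
      = TensorProduct.map x (TensorProduct.map a' b') (f.lTensor X t) := by
  induction t with
  | zero => simp
  | tmul x y => simp [h]
  | add x y hx hy => simp only [map_add, hx, hy]

theorem lT_comp {X Y Z W : Type*} [AddCommGroup X] [Module k X] [AddCommGroup Y]
    [Module k Y] [AddCommGroup Z] [Module k Z] [AddCommGroup W] [Module k W]
    (f : Y →ₗ[k] Z) (g : Z →ₗ[k] W) (t : X ⊗[k] Y) :
    g.lTensor X (f.lTensor X t) = (g ∘ₗ f).lTensor X t := by
  simp [LinearMap.lTensor_comp]

/-- Braid relation for `R`. -/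
theorem braid_R {A : Type*} [Ring A] [Algebra k A] (q : k) (hq : q ≠ 0)
    (R : A ⊗[k] A →ₗ[k] A ⊗[k] A)
    (hR : ∀ a b : A, R (a ⊗ₜ[k] b) =
      q⁻¹ • ((a * b) ⊗ₜ[k] (1 : A)) + q • ((1 : A) ⊗ₜ[k] (a * b)) - q⁻¹ • (a ⊗ₜ[k] b))
    (t : A ⊗[k] (A ⊗[k] A)) :
    opL A R (R.lTensor A (opL A R t)) = R.lTensor A (opL A R (R.lTensor A t)) := by
  suffices H : opL A R ∘ₗ R.lTensor A ∘ₗ opL A R = R.lTensor A ∘ₗ opL A R ∘ₗ R.lTensor A from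
    LinearMap.congr_fun H t
  ext a b c
  simp only [TensorProduct.AlgebraTensorModule.curry_apply, TensorProduct.curry_apply,
    LinearMap.coe_restrictScalars, LinearMap.comp_apply, LinearMap.lTensor_tmul, opL_tmul,
    hR, map_add, map_sub, map_smul, TensorProduct.add_tmul, TensorProduct.sub_tmul,
    TensorProduct.tmul_add, TensorProduct.tmul_sub, ← TensorProduct.smul_tmul',
    TensorProduct.tmul_smul, TensorProduct.assoc_tmul, mul_one, one_mul, mul_assoc, smul_add,
    smul_sub]
  match_scalars <;> field_simp <;> ring

theorem hecke_R {A : Type*} [Ring A] [Algebra k A] (q : k) (hq : q ≠ 0)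
    (R : A ⊗[k] A →ₗ[k] A ⊗[k] A)
    (hR : ∀ a b : A, R (a ⊗ₜ[k] b) =
      q⁻¹ • ((a * b) ⊗ₜ[k] (1 : A)) + q • ((1 : A) ⊗ₜ[k] (a * b)) - q⁻¹ • (a ⊗ₜ[k] b)) :
    R ∘ₗ R = (q - q⁻¹) • R + LinearMap.id := by
  ext a b
  simp [hR]
  match_scalars <;> field_simp <;> ring

/-- The second operator acts as multiplication by q on the image of comultiplication. -/
theorem R'_comul {C : Type*} [AddCommGroup C] [Module k C] [Coalgebra k C] (q : k)
    (R' : C ⊗[k] C →ₗ[k] C ⊗[k] C)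
    (hR' : ∀ c d : C, R' (c ⊗ₜ[k] d) =
      (q⁻¹ * Coalgebra.counit (R := k) c) • Coalgebra.comul (R := k) d
      + (q * Coalgebra.counit (R := k) d) • Coalgebra.comul (R := k) c
      - q⁻¹ • (c ⊗ₜ[k] d)) (c : C) :
    R' (Coalgebra.comul (R := k) c) = q • Coalgebra.comul (R := k) c := by
  have key : ∀ t : C ⊗[k] C, R' t =
      q⁻¹ • Coalgebra.comul (R := k) (TensorProduct.lid k C
        ((Coalgebra.counit (R := k) (A := C)).rTensor C t))
      + q • Coalgebra.comul (R := k) (TensorProduct.rid k C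
        ((Coalgebra.counit (R := k) (A := C)).lTensor C t)) - q⁻¹ • t := by
    intro t
    induction t with
    | zero => simp
    | tmul x y => simp [hR', mul_smul]
    | add x y hx hy => simp only [map_add, hx, hy, smul_add]; abel
  rw [key, Coalgebra.rTensor_counit_comul, Coalgebra.lTensor_counit_comul]
  simp

theorem hecke_R' {C : Type*} [AddCommGroup C] [Module k C] [Coalgebra k C] (q : k) (hq : q ≠ 0)
    (R' : C ⊗[k] C →ₗ[k] C ⊗[k] C)
    (hR' : ∀ c d : C, R' (c ⊗ₜ[k] d) =
      (q⁻¹ * Coalgebra.counit (R := k) c) • Coalgebra.comul (R := k) d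
      + (q * Coalgebra.counit (R := k) d) • Coalgebra.comul (R := k) c
      - q⁻¹ • (c ⊗ₜ[k] d)) :
    R' ∘ₗ R' = (q - q⁻¹) • R' + LinearMap.id := by
  ext a b
  simp [hR', R'_comul q R' hR']
  match_scalars <;> field_simp <;> ring

theorem braid_R' {C : Type*} [AddCommGroup C] [Module k C] [Coalgebra k C] (q : k) (hq : q ≠ 0)
    (R' : C ⊗[k] C →ₗ[k] C ⊗[k] C)
    (hR' : ∀ c d : C, R' (c ⊗ₜ[k] d) =
      (q⁻¹ * Coalgebra.counit (R := k) c) • Coalgebra.comul (R := k) d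
      + (q * Coalgebra.counit (R := k) d) • Coalgebra.comul (R := k) c
      - q⁻¹ • (c ⊗ₜ[k] d))
    (t : C ⊗[k] (C ⊗[k] C)) :
    opL C R' (R'.lTensor C (opL C R' t)) = R'.lTensor C (opL C R' (R'.lTensor C t)) := by
  have hc := R'_comul q R' hR'
  have h1 : ∀ (c : C) (t : C ⊗[k] C), opL C R' (c ⊗ₜ t) =
      (q⁻¹ * Coalgebra.counit (R := k) c) • TensorProduct.assoc k C C C
        ((Coalgebra.comul (R := k) (A := C)).rTensor C t)
      + q • TensorProduct.assoc k C C C (Coalgebra.comul (R := k) c ⊗ₜ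
          (TensorProduct.lid k C ((Coalgebra.counit (R := k) (A := C)).rTensor C t)))
      - q⁻¹ • (c ⊗ₜ t) := by
    intro c t
    induction t with
    | zero => simp
    | tmul x y =>
      simp [opL_tmul, hR', TensorProduct.add_tmul, TensorProduct.sub_tmul,
        ← TensorProduct.smul_tmul', mul_smul]
    | add x y hx hy =>
      simp only [map_add, TensorProduct.tmul_add, hx, hy, smul_add]; abel
  have h2 : ∀ (c : C) (t : C ⊗[k] C),
      R'.lTensor C (TensorProduct.assoc k C C C (t ⊗ₜ c)) =
      q⁻¹ • ((TensorProduct.rid k C ((Coalgebra.counit (R := k) (A := C)).lTensor C t)) ⊗ₜ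
          Coalgebra.comul (R := k) c)
      + (q * Coalgebra.counit (R := k) c) •
        ((Coalgebra.comul (R := k) (A := C)).lTensor C t)
      - q⁻¹ • TensorProduct.assoc k C C C (t ⊗ₜ c) := by
    intro c t
    induction t with
    | zero => simp
    | tmul x y =>
      simp [hR', TensorProduct.tmul_add, TensorProduct.tmul_sub, mul_smul,
        ← TensorProduct.smul_tmul']
    | add x y hx hy =>
      simp only [map_add, TensorProduct.add_tmul, hx, hy, smul_add]; abel
  have h3 : ∀ (c d : C), opL C R' (c ⊗ₜ Coalgebra.comul (R := k) d) =
      (q⁻¹ * Coalgebra.counit (R := k) c) • 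
        ((Coalgebra.comul (R := k) (A := C)).lTensor C (Coalgebra.comul (R := k) d))
      + q • TensorProduct.assoc k C C C (Coalgebra.comul (R := k) c ⊗ₜ d)
      - q⁻¹ • (c ⊗ₜ Coalgebra.comul (R := k) d) := by
    intro c d
    rw [h1, Coalgebra.coassoc_apply, Coalgebra.rTensor_counit_comul]
    simp
  have h4 : ∀ (c d : C),
      R'.lTensor C (TensorProduct.assoc k C C C (Coalgebra.comul (R := k) d ⊗ₜ c)) =
      q⁻¹ • (d ⊗ₜ Coalgebra.comul (R := k) c)
      + (q * Coalgebra.counit (R := k) c) •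
        ((Coalgebra.comul (R := k) (A := C)).lTensor C (Coalgebra.comul (R := k) d))
      - q⁻¹ • TensorProduct.assoc k C C C (Coalgebra.comul (R := k) d ⊗ₜ c) := by
    intro c d
    rw [h2, Coalgebra.lTensor_counit_comul]
    simp
  have h5 : ∀ d : C, R'.lTensor C ((Coalgebra.comul (R := k) (A := C)).lTensor C
      (Coalgebra.comul (R := k) d)) = q • ((Coalgebra.comul (R := k) (A := C)).lTensor C
      (Coalgebra.comul (R := k) d)) := by
    intro d
    rw [lT_comp]
    have : R' ∘ₗ Coalgebra.comul (R := k) (A := C) = q • Coalgebra.comul (R := k) (A := C) := by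
      ext c; simp [hc]
    rw [this]; simp [LinearMap.lTensor_smul]
  have h6 : ∀ d : C, opL C R' ((Coalgebra.comul (R := k) (A := C)).lTensor C
      (Coalgebra.comul (R := k) d)) = q • ((Coalgebra.comul (R := k) (A := C)).lTensor C
      (Coalgebra.comul (R := k) d)) := by
    intro d
    rw [← Coalgebra.coassoc_apply]
    generalize Coalgebra.comul (R := k) d = t
    induction t with
    | zero => simp
    | tmul x y => simp [opL_assoc, hc, ← TensorProduct.smul_tmul']
    | add x y hx hy => simp only [map_add, hx, hy, smul_add]
  suffices H : opL C R' ∘ₗ R'.lTensor C ∘ₗ opL C R' = R'.lTensor C ∘ₗ opL C R' ∘ₗ R'.lTensor C from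
    LinearMap.congr_fun H t
  ext a b c
  simp only [TensorProduct.AlgebraTensorModule.curry_apply, TensorProduct.curry_apply,
    LinearMap.coe_restrictScalars, LinearMap.comp_apply, LinearMap.lTensor_tmul, opL_tmul,
    hR', map_add, map_sub, map_smul, TensorProduct.add_tmul, TensorProduct.sub_tmul,
    TensorProduct.tmul_add, TensorProduct.tmul_sub, ← TensorProduct.smul_tmul',
    TensorProduct.tmul_smul, TensorProduct.assoc_tmul, smul_add,
    smul_sub, h3, h4, h5, h6, opL_assoc, hc]
  match_scalars <;> field_simp <;> ring

theorem ent_R {A C : Type*} [Ring A] [Algebra k A] [AddCommGroup C] [Module k C] [Coalgebra k C]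
    (q : k) (ψ : C ⊗[k] A →ₗ[k] A ⊗[k] C) (hψ : IsEntwining k ψ)
    (R : A ⊗[k] A →ₗ[k] A ⊗[k] A)
    (hR : ∀ a b : A, R (a ⊗ₜ[k] b) =
      q⁻¹ • ((a * b) ⊗ₜ[k] (1 : A)) + q • ((1 : A) ⊗ₜ[k] (a * b)) - q⁻¹ • (a ⊗ₜ[k] b))
    (t : C ⊗[k] (A ⊗[k] A)) :
    opL C R (ψ.lTensor A (opL A ψ t)) = ψ.lTensor A (opL A ψ (R.lTensor C t)) := by
  obtain ⟨e1, -, e3, -⟩ := hψ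
  have h1 : ∀ s : A ⊗[k] (A ⊗[k] C), opL C R s =
      q⁻¹ • (TensorProduct.mk k A C 1).lTensor A
        ((LinearMap.mul' k A).rTensor C ((TensorProduct.assoc k A A C).symm s))
      + q • ((1 : A) ⊗ₜ
        ((LinearMap.mul' k A).rTensor C ((TensorProduct.assoc k A A C).symm s)))
      - q⁻¹ • s := by
    intro s
    obtain ⟨s, rfl⟩ := (TensorProduct.assoc k A A C).surjective s
    induction s with
    | zero => simp
    | add x y hx hy => simp only [map_add, hx, hy, smul_add, TensorProduct.tmul_add]; abel
    | tmul x c =>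
    induction x with
    | zero => simp
    | add x y hx hy =>
      simp only [map_add, hx, hy, smul_add, TensorProduct.tmul_add, TensorProduct.add_tmul]; abel
    | tmul a b =>
      simp [opL_tmul, hR, TensorProduct.add_tmul, TensorProduct.sub_tmul,
        ← TensorProduct.smul_tmul']
  have h2 : ∀ (c : C) (a b : A), (LinearMap.mul' k A).rTensor C ((TensorProduct.assoc k A A C).symm
      (ψ.lTensor A (opL A ψ (c ⊗ₜ (a ⊗ₜ b))))) = ψ (c ⊗ₜ (a * b)) := by
    intro c a b
    rw [e1]; simp [opL_tmul]
  have h3 : ∀ (c : C) (a : A), ψ.lTensor A (opL A ψ (c ⊗ₜ (1 ⊗ₜ a))) = 1 ⊗ₜ ψ (c ⊗ₜ a) := by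
    intro c a
    simp [opL_tmul, e3]
  have h4 : ∀ (c : C) (a : A), ψ.lTensor A (opL A ψ (c ⊗ₜ (a ⊗ₜ 1))) =
      (TensorProduct.mk k A C 1).lTensor A (ψ (c ⊗ₜ a)) := by
    intro c a
    rw [opL_tmul]
    generalize ψ (c ⊗ₜ a) = s
    induction s with
    | zero => simp
    | tmul x y => simp [e3]
    | add x y hx hy => simp only [map_add, TensorProduct.add_tmul, hx, hy]
  suffices H : opL C R ∘ₗ ψ.lTensor A ∘ₗ opL A ψ = ψ.lTensor A ∘ₗ opL A ψ ∘ₗ R.lTensor C from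
    LinearMap.congr_fun H t
  ext c a b
  simp only [TensorProduct.AlgebraTensorModule.curry_apply, TensorProduct.curry_apply,
    LinearMap.coe_restrictScalars, LinearMap.comp_apply, LinearMap.lTensor_tmul]
  rw [h1, h2, hR]
  simp only [map_add, map_sub, map_smul, TensorProduct.tmul_add, TensorProduct.tmul_sub,
    TensorProduct.tmul_smul, h3, h4]

theorem ent_R' {A C : Type*} [Ring A] [Algebra k A] [AddCommGroup C] [Module k C] [Coalgebra k C]
    (q : k) (ψ : C ⊗[k] A →ₗ[k] A ⊗[k] C) (hψ : IsEntwining k ψ)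
    (R' : C ⊗[k] C →ₗ[k] C ⊗[k] C)
    (hR' : ∀ c d : C, R' (c ⊗ₜ[k] d) =
      (q⁻¹ * Coalgebra.counit (R := k) c) • Coalgebra.comul (R := k) d
      + (q * Coalgebra.counit (R := k) d) • Coalgebra.comul (R := k) c
      - q⁻¹ • (c ⊗ₜ[k] d))
    (t : C ⊗[k] (C ⊗[k] A)) :
    R'.lTensor A (opL C ψ (ψ.lTensor C t)) = opL C ψ (ψ.lTensor C (opL A R' t)) := by
  obtain ⟨-, e2, -, e4⟩ := hψ
  -- the two partial counits `A ⊗ C ⊗ C → A ⊗ C`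
  have h1 : ∀ s : A ⊗[k] (C ⊗[k] C), R'.lTensor A s =
      q⁻¹ • (Coalgebra.comul (R := k) (A := C)).lTensor A
        (((TensorProduct.lid k C).toLinearMap ∘ₗ
          (Coalgebra.counit (R := k) (A := C)).rTensor C).lTensor A s)
      + q • (Coalgebra.comul (R := k) (A := C)).lTensor A
        (((TensorProduct.rid k C).toLinearMap ∘ₗ
          (Coalgebra.counit (R := k) (A := C)).lTensor C).lTensor A s)
      - q⁻¹ • s := by
    intro s
    induction s with
    | zero => simp
    | add x y hx hy => simp only [map_add, hx, hy, smul_add]; abel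
    | tmul a x =>
    induction x with
    | zero => simp
    | add x y hx hy =>
      simp only [map_add, hx, hy, smul_add, TensorProduct.tmul_add]; abel
    | tmul c d =>
      simp [hR', TensorProduct.tmul_add, TensorProduct.tmul_sub, mul_smul]
  have e4' : ∀ s : C ⊗[k] A, TensorProduct.rid k A
      ((Coalgebra.counit (R := k) (A := C)).lTensor A (ψ s)) =
      TensorProduct.lid k A ((Coalgebra.counit (R := k) (A := C)).rTensor A s) := by
    intro s
    induction s with
    | zero => simp
    | tmul x y => rw [e4]; simp
    | add x y hx hy => simp only [map_add, hx, hy]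
  have e2' : ∀ (c : C) (a : A), opL C ψ (ψ.lTensor C (TensorProduct.assoc k C C A
      (Coalgebra.comul (R := k) c ⊗ₜ a))) =
      (Coalgebra.comul (R := k) (A := C)).lTensor A (ψ (c ⊗ₜ a)) := by
    intro c a
    rw [e2]; simp [opL]
  have h2 : ∀ (c d : C) (a : A), ((TensorProduct.lid k C).toLinearMap ∘ₗ
          (Coalgebra.counit (R := k) (A := C)).rTensor C).lTensor A
          (opL C ψ (ψ.lTensor C (c ⊗ₜ (d ⊗ₜ a)))) =
          Coalgebra.counit (R := k) c • ψ (d ⊗ₜ a) := by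
    intro c d a
    rw [LinearMap.lTensor_tmul]
    generalize ψ (d ⊗ₜ a) = s
    induction s with
    | zero => simp
    | add x y hx hy => simp only [map_add, TensorProduct.tmul_add, hx, hy, smul_add]
    | tmul b e =>
      rw [opL_tmul]
      have aux : ∀ u : A ⊗[k] C, ((TensorProduct.lid k C).toLinearMap ∘ₗ
          (Coalgebra.counit (R := k) (A := C)).rTensor C).lTensor A
          (TensorProduct.assoc k A C C (u ⊗ₜ e)) =
          (TensorProduct.rid k A ((Coalgebra.counit (R := k) (A := C)).lTensor A u)) ⊗ₜ e := by
        intro u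
        induction u with
        | zero => simp
        | tmul x y => simp [TensorProduct.smul_tmul]
        | add x y hx hy => simp only [map_add, TensorProduct.add_tmul, hx, hy]
      rw [aux, e4']
      simp [TensorProduct.smul_tmul']
  have h3 : ∀ (c d : C) (a : A), ((TensorProduct.rid k C).toLinearMap ∘ₗ
          (Coalgebra.counit (R := k) (A := C)).lTensor C).lTensor A
          (opL C ψ (ψ.lTensor C (c ⊗ₜ (d ⊗ₜ a)))) =
          Coalgebra.counit (R := k) d • ψ (c ⊗ₜ a) := by
    intro c d a
    have aux : ∀ u : A ⊗[k] C, ((TensorProduct.rid k C).toLinearMap ∘ₗ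
          (Coalgebra.counit (R := k) (A := C)).lTensor C).lTensor A
          (opL C ψ (c ⊗ₜ u)) =
          ψ (c ⊗ₜ (TensorProduct.rid k A
            ((Coalgebra.counit (R := k) (A := C)).lTensor A u))) := by
      intro u
      induction u with
      | zero => simp
      | add x y hx hy => simp only [map_add, TensorProduct.tmul_add, hx, hy]
      | tmul x y =>
        rw [opL_tmul, LinearMap.lTensor_tmul, TensorProduct.rid_tmul, TensorProduct.tmul_smul,
          map_smul]
        generalize ψ (c ⊗ₜ x) = s
        induction s with
        | zero => simp
        | add x y hx hy => simp only [map_add, TensorProduct.add_tmul, hx, hy, smul_add]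
        | tmul b e => simp
    rw [LinearMap.lTensor_tmul, aux, e4']
    simp
  suffices H : R'.lTensor A ∘ₗ opL C ψ ∘ₗ ψ.lTensor C = opL C ψ ∘ₗ ψ.lTensor C ∘ₗ opL A R' from
    LinearMap.congr_fun H t
  ext c d a
  simp only [TensorProduct.AlgebraTensorModule.curry_apply, TensorProduct.curry_apply,
    LinearMap.coe_restrictScalars, LinearMap.comp_apply]
  rw [h1, h2, h3, opL_tmul, hR']
  simp only [map_add, map_sub, map_smul, TensorProduct.add_tmul, TensorProduct.sub_tmul,
    ← TensorProduct.smul_tmul', e2', TensorProduct.assoc_tmul, mul_smul]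

/-- The map induced on triple tensor products. -/
noncomputable abbrev E3 {X Y Z V : Type*} [AddCommGroup X] [Module k X] [AddCommGroup Y]
    [Module k Y] [AddCommGroup Z] [Module k Z] [AddCommGroup V] [Module k V]
    (x : X →ₗ[k] V) (y : Y →ₗ[k] V) (z : Z →ₗ[k] V) :
    X ⊗[k] (Y ⊗[k] Z) →ₗ[k] V ⊗[k] (V ⊗[k] V) :=
  TensorProduct.map x (TensorProduct.map y z)

end Helpers

/-- Let `(A,C)_ψ` be an entwining structure with `ψ` bijective (inverse `φ`)
and `q ∈ k` nonzero. Define `R` on `A⊗A` by `R(a⊗b) = q⁻¹ab⊗1 + q·1⊗ab − q⁻¹a⊗b`, `R'`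
on `C⊗C` by `R'(c⊗d) = q⁻¹ε(c)Δ(d) + qε(d)Δ(c) − q⁻¹c⊗d`, and `T = R ⊕_ψ R'` on
`(A⊕C)⊗(A⊕C)` blockwise: `R` on `A⊗A`, `R'` on `C⊗C`, `ψ⁻¹` on `A⊗C`, and
`ψ + (q − q⁻¹)·id` on `C⊗A`. Then `T` is a `q`-Hecke operator: it is invertible,
satisfies the braid equation, and `(T + q⁻¹)(T − q) = 0`. -/
theorem stmt16 (k A C : Type*) [Field k] [Ring A] [Algebra k A]
    [AddCommGroup C] [Module k C] [Coalgebra k C]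
    (q : k) (hq : q ≠ 0)
    (ψ : C ⊗[k] A →ₗ[k] A ⊗[k] C) (hψ : IsEntwining k ψ)
    (φ : A ⊗[k] C →ₗ[k] C ⊗[k] A)
    (hφ1 : ψ ∘ₗ φ = LinearMap.id) (hφ2 : φ ∘ₗ ψ = LinearMap.id)
    (R : A ⊗[k] A →ₗ[k] A ⊗[k] A)
    (hR : ∀ a b : A, R (a ⊗ₜ[k] b) =
      q⁻¹ • ((a * b) ⊗ₜ[k] (1 : A)) + q • ((1 : A) ⊗ₜ[k] (a * b)) - q⁻¹ • (a ⊗ₜ[k] b))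
    (R' : C ⊗[k] C →ₗ[k] C ⊗[k] C)
    (hR' : ∀ c d : C, R' (c ⊗ₜ[k] d) =
      (q⁻¹ * Coalgebra.counit (R := k) c) • Coalgebra.comul (R := k) d
      + (q * Coalgebra.counit (R := k) d) • Coalgebra.comul (R := k) c
      - q⁻¹ • (c ⊗ₜ[k] d))
    -- the glued operator T = R ⊕_ψ R' on (A ⊕ C) ⊗ (A ⊕ C), defined blockwise
    (T : (A × C) ⊗[k] (A × C) →ₗ[k] (A × C) ⊗[k] (A × C))
    (hTAA : ∀ a b : A, T ((LinearMap.inl k A C a) ⊗ₜ[k] (LinearMap.inl k A C b)) =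
      (TensorProduct.map (LinearMap.inl k A C) (LinearMap.inl k A C)) (R (a ⊗ₜ[k] b)))
    (hTCC : ∀ c d : C, T ((LinearMap.inr k A C c) ⊗ₜ[k] (LinearMap.inr k A C d)) =
      (TensorProduct.map (LinearMap.inr k A C) (LinearMap.inr k A C)) (R' (c ⊗ₜ[k] d)))
    (hTAC : ∀ (a : A) (c : C), T ((LinearMap.inl k A C a) ⊗ₜ[k] (LinearMap.inr k A C c)) =
      (TensorProduct.map (LinearMap.inr k A C) (LinearMap.inl k A C)) (φ (a ⊗ₜ[k] c)))
    (hTCA : ∀ (c : C) (a : A), T ((LinearMap.inr k A C c) ⊗ₜ[k] (LinearMap.inl k A C a)) =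
      (TensorProduct.map (LinearMap.inl k A C) (LinearMap.inr k A C)) (ψ (c ⊗ₜ[k] a))
        + (q - q⁻¹) • ((LinearMap.inr k A C c) ⊗ₜ[k] (LinearMap.inl k A C a)))
    -- T₁₂ acting as T on the first two tensor factors of (A⊕C)⊗(A⊕C)⊗(A⊕C)
    (T12 : (A × C) ⊗[k] ((A × C) ⊗[k] (A × C)) →ₗ[k] (A × C) ⊗[k] ((A × C) ⊗[k] (A × C)))
    (hT12 : ∀ u v w : A × C, T12 (u ⊗ₜ[k] (v ⊗ₜ[k] w)) =
      ((TensorProduct.mk k (A × C) (A × C)).flip w).lTensor (A × C) (T (u ⊗ₜ[k] v))) :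
    Function.Bijective T ∧
    T12 ∘ₗ T.lTensor (A × C) ∘ₗ T12 = T.lTensor (A × C) ∘ₗ T12 ∘ₗ T.lTensor (A × C) ∧
    (T + q⁻¹ • LinearMap.id) ∘ₗ (T - q • LinearMap.id) = 0 := by
  generalize hi : LinearMap.inl k A C = i at hTAA hTAC hTCA
  generalize hj : LinearMap.inr k A C = j at hTCC hTAC hTCA
  have ψφ : ∀ s, ψ (φ s) = s := fun s => LinearMap.congr_fun hφ1 s
  have φψ : ∀ s, φ (ψ s) = s := fun s => LinearMap.congr_fun hφ2 s
  have tAA : ∀ s, T (TensorProduct.map i i s) =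
      TensorProduct.map i i (R s) := by
    intro s
    induction s with
    | zero => simp
    | tmul x y => rw [← hTAA, TensorProduct.map_tmul]
    | add x y hx hy => simp only [map_add, hx, hy]
  have tCC : ∀ s, T (TensorProduct.map j j s) =
      TensorProduct.map j j (R' s) := by
    intro s
    induction s with
    | zero => simp
    | tmul x y => rw [← hTCC, TensorProduct.map_tmul]
    | add x y hx hy => simp only [map_add, hx, hy]
  have tAC : ∀ s, T (TensorProduct.map i j s) =
      TensorProduct.map j i (φ s) := by
    intro s
    induction s with
    | zero => simp
    | tmul x y => rw [← hTAC, TensorProduct.map_tmul]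
    | add x y hx hy => simp only [map_add, hx, hy]
  have tCA : ∀ s, T (TensorProduct.map j i s) =
      TensorProduct.map i j (ψ s) +
      (q - q⁻¹) • TensorProduct.map j i s := by
    intro s
    induction s with
    | zero => simp
    | tmul x y => rw [TensorProduct.map_tmul, hTCA]
    | add x y hx hy => simp only [map_add, hx, hy, smul_add]; abel
  have hRR := hecke_R q hq R hR
  have hRR' := hecke_R' q hq R' hR'
  have RR : ∀ s, R (R s) = (q - q⁻¹) • R s + s := fun s => LinearMap.congr_fun hRR s
  have RR' : ∀ s, R' (R' s) = (q - q⁻¹) • R' s + s := fun s => LinearMap.congr_fun hRR' s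
  -- Decomposition of a vector.
  have dec : ∀ u : A × C, u = i u.1 + j u.2 := by
    intro u; simp [← hi, ← hj]
  have TT : ∀ s, T (T s) = (q - q⁻¹) • T s + s := by
    intro s
    induction s with
    | zero => simp
    | add x y hx hy => simp only [map_add, hx, hy, smul_add]; abel
    | tmul u v =>
      rw [dec u, dec v]
      simp only [TensorProduct.add_tmul, TensorProduct.tmul_add, map_add, smul_add]
      simp only [← TensorProduct.map_tmul, tAA, tAC, tCA, tCC, map_add, map_smul, RR, RR', ψφ, φψ,
        smul_add]
      abel
  have hT12' : T12 = opL (A × C) T := by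
    ext1
    refine LinearMap.ext fun u => ?_
    ext1
    refine LinearMap.ext fun v => ?_
    refine LinearMap.ext fun w => ?_
    simp only [TensorProduct.AlgebraTensorModule.curry_apply, TensorProduct.curry_apply,
      LinearMap.coe_restrictScalars, LinearMap.comp_apply, hT12, opL_tmul]
    generalize T (u ⊗ₜ v) = s
    induction s with
    | zero => simp
    | tmul x y => simp
    | add x y hx hy => simp only [map_add, TensorProduct.add_tmul, hx, hy]
  subst hT12'
  refine ⟨?_, ?_, ?_⟩
  · refine Function.bijective_iff_has_inverse.2 ⟨fun s => T s - (q - q⁻¹) • s, ?_, ?_⟩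
    · intro s; simp only [TT]; abel
    · intro s; simp only [map_sub, map_smul, TT]; abel
  · refine LinearMap.ext fun t => ?_
    simp only [LinearMap.comp_apply]
    -- inverse relations on triple tensor products
    have lψφA : ∀ s : A ⊗[k] (A ⊗[k] C), ψ.lTensor A (φ.lTensor A s) = s := by
      intro s; rw [lT_comp, hφ1]; simp
    have lφψA : ∀ s : A ⊗[k] (C ⊗[k] A), φ.lTensor A (ψ.lTensor A s) = s := by
      intro s; rw [lT_comp, hφ2]; simp
    have LψφA : ∀ s : A ⊗[k] (C ⊗[k] A), opL A ψ (opL A φ s) = s := by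
      intro s; rw [opL_comp, hφ1, opL_id]
    have LφψA : ∀ s : C ⊗[k] (A ⊗[k] A), opL A φ (opL A ψ s) = s := by
      intro s; rw [opL_comp, hφ2, opL_id]
    have lψφC : ∀ s : C ⊗[k] (A ⊗[k] C), ψ.lTensor C (φ.lTensor C s) = s := by
      intro s; rw [lT_comp, hφ1]; simp
    have lφψC : ∀ s : C ⊗[k] (C ⊗[k] A), φ.lTensor C (ψ.lTensor C s) = s := by
      intro s; rw [lT_comp, hφ2]; simp
    have LψφC : ∀ s : A ⊗[k] (C ⊗[k] C), opL C ψ (opL C φ s) = s := by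
      intro s; rw [opL_comp, hφ1, opL_id]
    have LφψC : ∀ s : C ⊗[k] (A ⊗[k] C), opL C φ (opL C ψ s) = s := by
      intro s; rw [opL_comp, hφ2, opL_id]
    have lRR : ∀ s : C ⊗[k] (A ⊗[k] A), R.lTensor C (R.lTensor C s)
        = (q - q⁻¹) • R.lTensor C s + s := by
      intro s; rw [lT_comp, hRR]; simp [LinearMap.lTensor_add, LinearMap.lTensor_smul]
    have LRR' : ∀ s : C ⊗[k] (C ⊗[k] A), opL A R' (opL A R' s)
        = (q - q⁻¹) • opL A R' s + s := by
      intro s; rw [opL_comp, hRR', opL_add, opL_smul, opL_id]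
    -- the intertwining relations
    have eCAA := ent_R q ψ hψ R hR
    have eACA : ∀ s : A ⊗[k] (C ⊗[k] A), opL A ψ (R.lTensor C (opL A φ s))
        = φ.lTensor A (opL C R (ψ.lTensor A s)) := by
      intro s
      have := eCAA (opL A φ s)
      rw [LψφA] at this
      rw [this, lφψA]
    have eAAC : ∀ s : A ⊗[k] (A ⊗[k] C), opL A φ (φ.lTensor A (opL C R s))
        = R.lTensor C (opL A φ (φ.lTensor A s)) := by
      intro s
      have := eCAA (opL A φ (φ.lTensor A s))
      rw [LψφA, lψφA] at this
      rw [this, lφψA, LφψA]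
    have eCCA := ent_R' q ψ hψ R' hR'
    have eCAC : ∀ s : C ⊗[k] (A ⊗[k] C), ψ.lTensor C (opL A R' (φ.lTensor C s))
        = opL C φ (R'.lTensor A (opL C ψ s)) := by
      intro s
      have := eCCA (φ.lTensor C s)
      rw [lψφC] at this
      rw [this, LφψC]
    have eACC : ∀ s : A ⊗[k] (C ⊗[k] C), φ.lTensor C (opL C φ (R'.lTensor A s))
        = opL A R' (φ.lTensor C (opL C φ s)) := by
      intro s
      have := eCCA (φ.lTensor C (opL C φ s))
      rw [lψφC, LψφC] at this
      rw [this, LφψC, lφψC]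
    -- blockwise action of the two operators
    have tCA' : ∀ s, (T - (q - q⁻¹) • LinearMap.id : _ →ₗ[k] _)
        (TensorProduct.map j i s)
        = TensorProduct.map i j (ψ s) := by
      intro s
      rw [LinearMap.sub_apply, tCA]
      simp
    have LAAA : ∀ s, opL (A × C) T (E3 i i i s)
        = E3 i i i (opL A R s) :=
      opL_nat R T _ _ _ _ _ tAA
    have lAAA : ∀ s, T.lTensor (A × C) (E3 i i i s)
        = E3 i i i (R.lTensor A s) :=
      lT_nat R T _ _ _ _ _ tAA
    have LCCA : ∀ s, opL (A × C) T (E3 j j i s)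
        = E3 j j i (opL A R' s) :=
      opL_nat R' T _ _ _ _ _ tCC
    have lACC : ∀ s, T.lTensor (A × C) (E3 i j j s)
        = E3 i j j (R'.lTensor A s) :=
      lT_nat R' T _ _ _ _ _ tCC
    have LACA : ∀ s, opL (A × C) T (E3 i j i s)
        = E3 j i i (opL A φ s) :=
      opL_nat φ T _ _ _ _ _ tAC
    have lAAC : ∀ s, T.lTensor (A × C) (E3 i i j s)
        = E3 i j i (φ.lTensor A s) :=
      lT_nat φ T _ _ _ _ _ tAC
    have LCAA : ∀ s, opL (A × C) T (E3 j i i s)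
        = E3 i j i (opL A ψ s)
          + (q - q⁻¹) • E3 j i i s := by
      intro s
      have h := opL_nat ψ (T - (q - q⁻¹) • LinearMap.id) _ _ _ _ i tCA' s
      rw [← h, opL_sub, opL_smul, opL_id]
      module
    have lACA : ∀ s, T.lTensor (A × C) (E3 i j i s)
        = E3 i i j (ψ.lTensor A s)
          + (q - q⁻¹) • E3 i j i s := by
      intro s
      have h := lT_nat ψ (T - (q - q⁻¹) • LinearMap.id) _ _ _ _ i tCA' s
      rw [← h, LinearMap.lTensor_sub, LinearMap.lTensor_smul, LinearMap.lTensor_id]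
      simp
    have LAAC : ∀ s, opL (A × C) T (E3 i i j s)
        = E3 i i j (opL C R s) :=
      opL_nat R T _ _ _ _ _ tAA
    have lCAA : ∀ s, T.lTensor (A × C) (E3 j i i s)
        = E3 j i i (R.lTensor C s) :=
      lT_nat R T _ _ _ _ _ tAA
    have LCCC : ∀ s, opL (A × C) T (E3 j j j s)
        = E3 j j j (opL C R' s) :=
      opL_nat R' T _ _ _ _ _ tCC
    have lCCC : ∀ s, T.lTensor (A × C) (E3 j j j s)
        = E3 j j j (R'.lTensor C s) :=
      lT_nat R' T _ _ _ _ _ tCC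
    have LACC : ∀ s, opL (A × C) T (E3 i j j s)
        = E3 j i j (opL C φ s) :=
      opL_nat φ T _ _ _ _ _ tAC
    have lCAC : ∀ s, T.lTensor (A × C) (E3 j i j s)
        = E3 j j i (φ.lTensor C s) :=
      lT_nat φ T _ _ _ _ _ tAC
    have LCAC : ∀ s, opL (A × C) T (E3 j i j s)
        = E3 i j j (opL C ψ s)
          + (q - q⁻¹) • E3 j i j s := by
      intro s
      have h := opL_nat ψ (T - (q - q⁻¹) • LinearMap.id) _ _ _ _ j tCA' s
      rw [← h, opL_sub, opL_smul, opL_id]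
      module
    have lCCA : ∀ s, T.lTensor (A × C) (E3 j j i s)
        = E3 j i j (ψ.lTensor C s)
          + (q - q⁻¹) • E3 j j i s := by
      intro s
      have h := lT_nat ψ (T - (q - q⁻¹) • LinearMap.id) _ _ _ _ j tCA' s
      rw [← h, LinearMap.lTensor_sub, LinearMap.lTensor_smul, LinearMap.lTensor_id]
      simp
    have bAAA : ∀ s, opL (A × C) T (T.lTensor (A × C) (opL (A × C) T
        (E3 i i i s)))
        = T.lTensor (A × C) (opL (A × C) T (T.lTensor (A × C)
        (E3 i i i s))) := by
      intro s
      simp only [LAAA, lAAA, map_add, map_smul, smul_add, braid_R q hq R hR]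
    have bAAC : ∀ s, opL (A × C) T (T.lTensor (A × C) (opL (A × C) T
        (E3 i i j s)))
        = T.lTensor (A × C) (opL (A × C) T (T.lTensor (A × C)
        (E3 i i j s))) := by
      intro s
      simp only [LAAC, lAAC, LACA, lACA, LCAA, lCAA, map_add, map_smul, smul_add, eAAC]
    have bACA : ∀ s, opL (A × C) T (T.lTensor (A × C) (opL (A × C) T
        (E3 i j i s)))
        = T.lTensor (A × C) (opL (A × C) T (T.lTensor (A × C)
        (E3 i j i s))) := by
      intro s
      simp only [LAAC, lAAC, LACA, lACA, LCAA, lCAA, map_add, map_smul, smul_add, eACA]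
      try module
    have bCAA : ∀ s, opL (A × C) T (T.lTensor (A × C) (opL (A × C) T
        (E3 j i i s)))
        = T.lTensor (A × C) (opL (A × C) T (T.lTensor (A × C)
        (E3 j i i s))) := by
      intro s
      simp only [LAAC, lAAC, LACA, lACA, LCAA, lCAA, map_add, map_smul, smul_add, eCAA, lRR, LφψA]
      try module
    have bCCA : ∀ s, opL (A × C) T (T.lTensor (A × C) (opL (A × C) T
        (E3 j j i s)))
        = T.lTensor (A × C) (opL (A × C) T (T.lTensor (A × C)
        (E3 j j i s))) := by
      intro s
      simp only [LACC, lACC, LCAC, lCAC, LCCA, lCCA, map_add, map_smul, smul_add, eCCA, LRR', lφψC]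
      try module
    have bCAC : ∀ s, opL (A × C) T (T.lTensor (A × C) (opL (A × C) T
        (E3 j i j s)))
        = T.lTensor (A × C) (opL (A × C) T (T.lTensor (A × C)
        (E3 j i j s))) := by
      intro s
      simp only [LACC, lACC, LCAC, lCAC, LCCA, lCCA, map_add, map_smul, smul_add, eCAC]
      try module
    have bACC : ∀ s, opL (A × C) T (T.lTensor (A × C) (opL (A × C) T
        (E3 i j j s)))
        = T.lTensor (A × C) (opL (A × C) T (T.lTensor (A × C)
        (E3 i j j s))) := by
      intro s
      simp only [LACC, lACC, LCAC, lCAC, LCCA, lCCA, map_add, map_smul, smul_add, eACC]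
    have bCCC : ∀ s, opL (A × C) T (T.lTensor (A × C) (opL (A × C) T
        (E3 j j j s)))
        = T.lTensor (A × C) (opL (A × C) T (T.lTensor (A × C)
        (E3 j j j s))) := by
      intro s
      simp only [LCCC, lCCC, map_add, map_smul, smul_add, braid_R' q hq R' hR']
    induction t with
    | zero => simp
    | add x y hx hy => simp only [map_add, hx, hy]
    | tmul u p =>
    induction p with
    | zero => simp
    | add x y hx hy => simp only [map_add, TensorProduct.tmul_add, hx, hy]
    | tmul v w =>
      rw [dec u, dec v, dec w]
      simp only [TensorProduct.add_tmul, TensorProduct.tmul_add, map_add]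
      simp only [← TensorProduct.map_tmul, bAAA, bAAC, bACA, bCAA, bCCA, bCAC, bACC, bCCC]
  · refine LinearMap.ext fun s => ?_
    simp only [LinearMap.comp_apply, LinearMap.add_apply, LinearMap.sub_apply, LinearMap.smul_apply,
      LinearMap.id_apply, map_sub, map_smul, TT, LinearMap.zero_apply]
    match_scalars <;> field_simp <;> ring
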